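/- arXiv:2302.07772 — 3 statements merged into one kernel-verified Lean document; each statement's English description precedes it below -/
import Mathlib

section
/- For all constants K, K' > 0 and β ≥ 0 there exists C_β > 0 depending only on β, K, K' such that the following holds. Let n, d ∈ ℕ with n ≥ 2 and d ≤ n², let W satisfy Assumptions 1–4 with constants K, K', β, let W_1,…,W_d be independent copies of W, and set X = (1/d) ∑_{s=1}^d ( W_s ⊗ conj(W_s) − E(W_s ⊗ conj(W_s)) ). Then both ‖E(XX*)‖ ≤ (1/d)(1 + C_β/(log n)^{α_β}) and ‖E(X*X)‖ ≤ (1/d)(1 + C_β/(log n)^{α_β}), where α_β = max(β/2, 2). -/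
open MeasureTheory ProbabilityTheory Matrix
open scoped Kronecker ENNReal

/-- The (Borel) measurable space structure on matrices, obtained entrywise. -/
noncomputable instance matrixMeasurableSpace {m n α : Type*} [MeasurableSpace α] :
    MeasurableSpace (Matrix m n α) :=
  inferInstanceAs (MeasurableSpace (m → n → α))

/-- The ℓ²→ℓ² operator norm of a square matrix over `ℝ` or `ℂ`. -/
noncomputable def Matrix.opNorm2 {𝕜 : Type*} [RCLike 𝕜] {n : Type*} [Fintype n] [DecidableEq n]
    (A : Matrix n n 𝕜) : ℝ :=
  ‖LinearMap.toContinuousLinearMap (Matrix.toEuclideanLin A)‖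

/-- `Matrix.sval A k` is the `(k+1)`-st largest singular value of `A`, characterized via
best approximation in operator norm by matrices of rank at most `k`
(the Eckart–Young–Mirsky theorem); in particular `Matrix.sval A 0` is the largest singular
value `s_1(A)` and `Matrix.sval A 1` is the second largest singular value `s_2(A)`. -/
noncomputable def Matrix.sval {𝕜 : Type*} [RCLike 𝕜] {n : Type*} [Fintype n] [DecidableEq n]
    (A : Matrix n n 𝕜) (k : ℕ) : ℝ :=
  ⨅ B : {B : Matrix n n 𝕜 // B.rank ≤ k}, Matrix.opNorm2 (A - B.1)

/-- Entrywise expectation of a random matrix. -/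
noncomputable def matExp {Ω : Type*} [MeasurableSpace Ω] (μ : Measure Ω)
    {m n : Type*} (W : Ω → Matrix m n ℂ) : Matrix m n ℂ :=
  Matrix.of fun i j => ∫ ω, W ω i j ∂μ

/-- Assumptions 1–4 of the paper on an `n × n` random matrix `W` with variance profile `η`,
with constants `K` (Assumption 3), `K'` (Assumption 4) and parameter `β ≥ 0`:
the entries are independent, centered, have variances `η i j`, the variance matrix `η` is
doubly sub-stochastic, the entries satisfy the moment growth condition
`(E|W_{ij}|^{2p})^{1/p} ≤ K p^β η_{ij}`, and `max η_{ij} ≤ K'/(log n)^{α_β}` where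
`α_β = max (β/2) 2`. (Membership in every `L^p` is included so that all moments exist.) -/
structure PaperAssumptions {Ω : Type*} [MeasurableSpace Ω] (μ : Measure Ω)
    (n : ℕ) (K K' β : ℝ) (η : Matrix (Fin n) (Fin n) ℝ)
    (W : Ω → Matrix (Fin n) (Fin n) ℂ) : Prop where
  entries_indep : iIndepFun
      (fun (p : Fin n × Fin n) ω => W ω p.1 p.2) μ
  entries_memLp : ∀ i j (p : ℕ), MemLp (fun ω => W ω i j) p μ
  entries_centered : ∀ i j, ∫ ω, W ω i j ∂μ = 0
  entries_variance : ∀ i j, ∫ ω, ‖W ω i j‖ ^ 2 ∂μ = η i j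
  row_sums : ∀ i, ∑ j, η i j ≤ 1
  col_sums : ∀ j, ∑ i, η i j ≤ 1
  moment_growth : ∀ p : ℕ, 1 ≤ p → ∀ i j,
      (∫ ω, ‖W ω i j‖ ^ (2 * p) ∂μ) ^ ((1 : ℝ) / p) ≤ K * (p : ℝ) ^ β * η i j
  max_variance : ∀ i j, η i j ≤ K' / Real.log n ^ max (β / 2) 2

lemma opNorm2_le_schur {m : Type*} [Fintype m] [DecidableEq m] (A : Matrix m m ℂ) (B : ℝ)
    (hB : 0 ≤ B) (hr : ∀ p, ∑ q, ‖A p q‖ ≤ B) (hc : ∀ q, ∑ p, ‖A p q‖ ≤ B) :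
    Matrix.opNorm2 A ≤ B := by
  unfold Matrix.opNorm2
  refine ContinuousLinearMap.opNorm_le_bound _ hB fun x => ?_
  refine abs_le_of_sq_le_sq' ?_ (by positivity) |>.2
  rw [mul_pow, EuclideanSpace.norm_sq_eq, EuclideanSpace.norm_sq_eq]
  have h1 : ∀ p, ‖(LinearMap.toContinuousLinearMap (Matrix.toEuclideanLin A)) x p‖ ^ 2
      ≤ B * ∑ q, ‖A p q‖ * ‖x q‖ ^ 2 := by
    intro p
    have e : (LinearMap.toContinuousLinearMap (Matrix.toEuclideanLin A)) x p
        = ∑ q, A p q * x q := rfl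
    rw [e]
    calc ‖∑ q, A p q * x q‖ ^ 2 ≤ (∑ q, ‖A p q‖ * ‖x q‖) ^ 2 := by
          gcongr
          refine (norm_sum_le _ _).trans_eq (by simp)
      _ ≤ (∑ q, ‖A p q‖) * ∑ q, ‖A p q‖ * ‖x q‖ ^ 2 := by
          apply Finset.sum_sq_le_sum_mul_sum_of_sq_le_mul
          · intros; positivity
          · intros; positivity
          · intros; exact le_of_eq (by ring)
      _ ≤ _ := by
          gcongr
          exact hr p
  calc _ ≤ ∑ p, B * ∑ q, ‖A p q‖ * ‖x q‖ ^ 2 := Finset.sum_le_sum fun p _ => h1 p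
    _ = B * ∑ q, (∑ p, ‖A p q‖) * ‖x q‖ ^ 2 := by
        rw [← Finset.mul_sum, Finset.sum_comm]
        simp only [Finset.sum_mul]
    _ ≤ B * ∑ q, B * ‖x q‖ ^ 2 := by
        gcongr with q _
        exact hc q
    _ = _ := by rw [← Finset.mul_sum]; ring

lemma memLp_mul_all {Ω : Type*} [MeasurableSpace Ω] {μ : Measure Ω} {f g : Ω → ℂ}
    (hf : ∀ p : ℕ, MemLp f p μ) (hg : ∀ p : ℕ, MemLp g p μ) (p : ℕ) :
    MemLp (fun ω => f ω * g ω) p μ := by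
  have h : ENNReal.HolderTriple ((2 * p : ℕ) : ℝ≥0∞) ((2 * p : ℕ) : ℝ≥0∞) p := by
    constructor
    push_cast
    rw [ENNReal.mul_inv (by simp) (by simp), ← add_mul, ENNReal.inv_two_add_inv_two, one_mul]
  exact (hg (2 * p)).mul' (hf (2 * p))

lemma memLp_conj_all {Ω : Type*} [MeasurableSpace Ω] {μ : Measure Ω} {f : Ω → ℂ}
    (hf : ∀ p : ℕ, MemLp f p μ) (p : ℕ) :
    MemLp (fun ω => (starRingEnd ℂ) (f ω)) p μ := (hf p).star

lemma integral_iso {Ω : Type*} [MeasurableSpace Ω] {μ : Measure Ω}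
    {ι : Type*} {ξ : ι → Ω → ℂ} (hi : iIndepFun ξ μ)
    (hm : ∀ i, AEMeasurable (ξ i) μ) {a b c e : ι} (hab : a ≠ b) (hac : a ≠ c) (hae : a ≠ e)
    (φ : ℂ → ℂ) (hφ : Measurable φ) (ψ : ℂ × ℂ × ℂ → ℂ) (hψ : Measurable ψ) :
    ∫ ω, φ (ξ a ω) * ψ (ξ b ω, ξ c ω, ξ e ω) ∂μ
      = (∫ ω, φ (ξ a ω) ∂μ) * ∫ ω, ψ (ξ b ω, ξ c ω, ξ e ω) ∂μ := by
  classical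
  have h := hi.indepFun_finset₀ {a} {b, c, e} (by simp [hab, hac, hae]) hm
  have h2 : IndepFun (fun ω => φ (ξ a ω)) (fun ω => ψ (ξ b ω, ξ c ω, ξ e ω)) μ :=
    h.comp (φ := fun v : ({a} : Finset ι) → ℂ => φ (v ⟨a, by simp⟩))
      (ψ := fun v : ({b, c, e} : Finset ι) → ℂ => ψ (v ⟨b, by simp⟩, v ⟨c, by simp⟩, v ⟨e, by simp⟩))
      (by fun_prop) (by fun_prop)
  refine h2.integral_fun_mul_eq_mul_integral ?_ ?_
  · exact (hφ.comp_aemeasurable (hm a)).aestronglyMeasurable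
  · exact (hψ.comp_aemeasurable
      ((hm b).prodMk ((hm c).prodMk (hm e)))).aestronglyMeasurable

lemma cov4_bound {Ω : Type*} [MeasurableSpace Ω] {μ : Measure Ω} [IsProbabilityMeasure μ]
    {ι : Type*} [DecidableEq ι] {ξ : ι → Ω → ℂ} (hi : iIndepFun ξ μ)
    (hL : ∀ i (p : ℕ), MemLp (ξ i) p μ) (h0 : ∀ i, ∫ ω, ξ i ω ∂μ = 0)
    (v : ι → ℝ) (hv : ∀ i, ∫ ω, ‖ξ i ω‖ ^ 2 ∂μ = v i) (Q : ℝ)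
    (hQ : ∀ i, ∫ ω, ‖ξ i ω‖ ^ 4 ∂μ ≤ Q * v i ^ 2) (a b c e : ι) :
    ‖(∫ ω, (ξ a ω * (starRingEnd ℂ) (ξ b ω)) * (starRingEnd ℂ) (ξ c ω * (starRingEnd ℂ) (ξ e ω)) ∂μ)
      - (∫ ω, ξ a ω * (starRingEnd ℂ) (ξ b ω) ∂μ)
        * (starRingEnd ℂ) (∫ ω, ξ c ω * (starRingEnd ℂ) (ξ e ω) ∂μ)‖
      ≤ if a = c ∧ b = e then v a * v b + (if a = b then Q * v a ^ 2 else 0)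
        else if a = e ∧ b = c then v a * v b else 0 := by
  have hm : ∀ i, AEMeasurable (ξ i) μ := fun i => (hL i 1).aestronglyMeasurable.aemeasurable
  have hv0 : ∀ i, 0 ≤ v i := fun i => by
    rw [← hv i]; exact integral_nonneg fun _ => by positivity
  have hq0 : ∀ i, 0 ≤ Q * v i ^ 2 := fun i =>
    (integral_nonneg fun _ => by positivity).trans (hQ i)
  have hRHS : 0 ≤ if a = c ∧ b = e then v a * v b + (if a = b then Q * v a ^ 2 else 0)
        else if a = e ∧ b = c then v a * v b else 0 := by
    have := mul_nonneg (hv0 a) (hv0 b)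
    have := hq0 a
    split_ifs <;> simp <;> linarith
  have h0c : ∀ i, ∫ ω, (starRingEnd ℂ) (ξ i ω) ∂μ = 0 := fun i => by
    rw [integral_conj, h0]; simp
  have hcm : Measurable (starRingEnd ℂ) := Complex.continuous_conj.measurable
  have hpair : ∀ i j, i ≠ j → ∫ ω, ξ i ω * (starRingEnd ℂ) (ξ j ω) ∂μ = 0 := by
    intro i j hij
    have := integral_iso hi hm hij hij hij id measurable_id (fun z => (starRingEnd ℂ) z.1)
      (by fun_prop)
    simp only [id] at this
    rw [this, h0, zero_mul]
  have hn1 : ∀ i, ‖∫ ω, ξ i ω * (starRingEnd ℂ) (ξ i ω) ∂μ‖ ≤ v i := by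
    intro i
    refine (norm_integral_le_integral_norm _).trans_eq ?_
    rw [← hv i]
    congr 1; ext ω; simp [sq]
  have hn2 : ∀ i, ‖∫ ω, ξ i ω * ξ i ω ∂μ‖ ≤ v i := by
    intro i
    refine (norm_integral_le_integral_norm _).trans_eq ?_
    rw [← hv i]
    congr 1; ext ω; simp [sq]
  -- isolated index
  by_cases ha : a ≠ b ∧ a ≠ c ∧ a ≠ e
  · obtain ⟨hab, hac, hae⟩ := ha
    have := integral_iso hi hm hab hac hae id measurable_id
      (fun z => (starRingEnd ℂ) z.1 * (starRingEnd ℂ) (z.2.1 * (starRingEnd ℂ) z.2.2))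
      (by fun_prop)
    simp only [id] at this
    simp only [mul_assoc] at this ⊢
    rw [this, h0, hpair a b hab]
    simpa using hRHS
  by_cases hb : b ≠ a ∧ b ≠ c ∧ b ≠ e
  · obtain ⟨hab, hac, hae⟩ := hb
    have := integral_iso hi hm hab hac hae (starRingEnd ℂ) hcm
      (fun z => z.1 * (starRingEnd ℂ) (z.2.1 * (starRingEnd ℂ) z.2.2))
      (by fun_prop)
    have e1 : ∀ ω, (ξ a ω * (starRingEnd ℂ) (ξ b ω)) * (starRingEnd ℂ) (ξ c ω * (starRingEnd ℂ) (ξ e ω))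
      = (starRingEnd ℂ) (ξ b ω) * (ξ a ω * (starRingEnd ℂ) (ξ c ω * (starRingEnd ℂ) (ξ e ω))) := by
      intro ω; ring
    simp only [e1]
    rw [this, h0c, hpair a b hab.symm]
    simpa using hRHS
  by_cases hc : c ≠ a ∧ c ≠ b ∧ c ≠ e
  · obtain ⟨hab, hac, hae⟩ := hc
    have := integral_iso hi hm hab hac hae (starRingEnd ℂ) hcm
      (fun z => z.1 * (starRingEnd ℂ) z.2.1 * z.2.2)
      (by fun_prop)
    have e1 : ∀ ω, (ξ a ω * (starRingEnd ℂ) (ξ b ω)) * (starRingEnd ℂ) (ξ c ω * (starRingEnd ℂ) (ξ e ω))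
      = (starRingEnd ℂ) (ξ c ω) * (ξ a ω * (starRingEnd ℂ) (ξ b ω) * ξ e ω) := by
      intro ω; simp only [map_mul, Complex.conj_conj]; ring
    simp only [e1]
    rw [this, h0c, hpair c e hae]
    simpa using hRHS
  by_cases he : e ≠ a ∧ e ≠ b ∧ e ≠ c
  · obtain ⟨hab, hac, hae⟩ := he
    have := integral_iso hi hm hab hac hae id measurable_id
      (fun z => z.1 * (starRingEnd ℂ) z.2.1 * (starRingEnd ℂ) z.2.2)
      (by fun_prop)
    have e1 : ∀ ω, (ξ a ω * (starRingEnd ℂ) (ξ b ω)) * (starRingEnd ℂ) (ξ c ω * (starRingEnd ℂ) (ξ e ω))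
      = id (ξ e ω) * (ξ a ω * (starRingEnd ℂ) (ξ b ω) * (starRingEnd ℂ) (ξ c ω)) := by
      intro ω; simp only [map_mul, Complex.conj_conj, id]; ring
    simp only [e1]
    rw [this, hpair c e hae.symm]
    simp only [id]
    rw [h0]
    simpa using hRHS
  by_cases hab : a = b
  · subst hab
    have hce : c = e := by grind
    subst hce
    by_cases hac : a = c
    · subst hac
      simp only [and_self, if_true]
      refine (norm_sub_le _ _).trans ?_
      rw [add_comm (v a * v a)]
      refine add_le_add ?_ ?_
      · refine (norm_integral_le_integral_norm _).trans ((le_of_eq ?_).trans (hQ a))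
        congr 1; ext ω; simp; ring
      · rw [norm_mul, RCLike.norm_conj]
        exact mul_le_mul (hn1 a) (hn1 a) (norm_nonneg _) (hv0 a)
    · have := integral_iso hi hm hac hac hac (fun z => z * (starRingEnd ℂ) z) (by fun_prop)
        (fun z => (starRingEnd ℂ) (z.1 * (starRingEnd ℂ) z.1)) (by fun_prop)
      rw [this, integral_conj, sub_self, norm_zero]
      exact hRHS
  · rw [hpair a b hab, zero_mul, sub_zero]
    by_cases hac : a = c
    · subst hac
      have hbe : b = e := by grind
      subst hbe
      have := integral_iso hi hm hab hab hab (fun z => z * (starRingEnd ℂ) z) (by fun_prop)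
        (fun z => (starRingEnd ℂ) z.1 * z.1) (by fun_prop)
      have e1 : ∀ ω, (ξ a ω * (starRingEnd ℂ) (ξ b ω)) * (starRingEnd ℂ) (ξ a ω * (starRingEnd ℂ) (ξ b ω))
        = (ξ a ω * (starRingEnd ℂ) (ξ a ω)) * ((starRingEnd ℂ) (ξ b ω) * ξ b ω) := by
        intro ω; simp only [map_mul, Complex.conj_conj]; ring
      simp only [e1]
      rw [this, norm_mul]
      simp only [and_self, if_true, hab, if_false, add_zero]
      refine mul_le_mul (hn1 a) ?_ (norm_nonneg _) (hv0 a)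
      simp only [mul_comm ((starRingEnd ℂ) (ξ b _))]
      exact hn1 b
    · have hae : a = e := by grind
      have hbc : b = c := by grind
      subst hae hbc
      have := integral_iso hi hm hab hab hab (fun z => z * z) (by fun_prop)
        (fun z => (starRingEnd ℂ) (z.1 * z.1)) (by fun_prop)
      have e1 : ∀ ω, (ξ a ω * (starRingEnd ℂ) (ξ b ω)) * (starRingEnd ℂ) (ξ b ω * (starRingEnd ℂ) (ξ a ω))
        = (ξ a ω * ξ a ω) * ((starRingEnd ℂ) (ξ b ω * ξ b ω)) := by
        intro ω; simp only [map_mul, Complex.conj_conj]; ring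
      simp only [e1]
      rw [this, norm_mul, integral_conj, RCLike.norm_conj]
      simp only [hab, false_and, if_false, and_self, if_true]
      exact mul_le_mul (hn2 a) (hn2 b) (norm_nonneg _) (hv0 a)

lemma cov_sum {Ω : Type*} [MeasurableSpace Ω] {μ : Measure Ω} [IsProbabilityMeasure μ]
    {d : ℕ} (A B : Fin d → Ω → ℂ) (hA : ∀ s (p : ℕ), MemLp (A s) p μ)
    (hB : ∀ s (p : ℕ), MemLp (B s) p μ) (hAB : ∀ s t, s ≠ t → IndepFun (A s) (B t) μ) (k : ℂ) :
    Integrable (fun ω => (k * ∑ s, (A s ω - ∫ ω', A s ω' ∂μ))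
      * (starRingEnd ℂ) (k * ∑ s, (B s ω - ∫ ω', B s ω' ∂μ))) μ ∧
    ∫ ω, (k * ∑ s, (A s ω - ∫ ω', A s ω' ∂μ))
      * (starRingEnd ℂ) (k * ∑ s, (B s ω - ∫ ω', B s ω' ∂μ)) ∂μ
      = k * (starRingEnd ℂ) k * ∑ s, ((∫ ω, A s ω * (starRingEnd ℂ) (B s ω) ∂μ)
        - (∫ ω, A s ω ∂μ) * (starRingEnd ℂ) (∫ ω, B s ω ∂μ)) := by
  have hAi : ∀ s, Integrable (A s) μ := fun s => memLp_one_iff_integrable.1 (by simpa using hA s 1)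
  have hBi : ∀ s, Integrable (fun ω => (starRingEnd ℂ) (B s ω)) μ :=
    fun s => memLp_one_iff_integrable.1 (by simpa using memLp_conj_all (hB s) 1)
  have hABi : ∀ s t, Integrable (fun ω => A s ω * (starRingEnd ℂ) (B t ω)) μ := fun s t =>
    memLp_one_iff_integrable.1 (by simpa using memLp_mul_all (hA s) (memLp_conj_all (hB t)) 1)
  have e1 : ∀ ω, (k * ∑ s, (A s ω - ∫ ω', A s ω' ∂μ))
      * (starRingEnd ℂ) (k * ∑ s, (B s ω - ∫ ω', B s ω' ∂μ))
      = k * (starRingEnd ℂ) k * ∑ s, ∑ t, (A s ω * (starRingEnd ℂ) (B t ω)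
        - A s ω * (starRingEnd ℂ) (∫ ω', B t ω' ∂μ)
        - ((∫ ω', A s ω' ∂μ) * (starRingEnd ℂ) (B t ω)
          - (∫ ω', A s ω' ∂μ) * (starRingEnd ℂ) (∫ ω', B t ω' ∂μ))) := by
    intro ω
    rw [map_mul, map_sum, mul_mul_mul_comm, Finset.sum_mul_sum]
    congr 1
    refine Finset.sum_congr rfl fun s _ => Finset.sum_congr rfl fun t _ => ?_
    rw [map_sub]; ring
  have i1 : ∀ s t, Integrable (fun ω => A s ω * (starRingEnd ℂ) (∫ ω', B t ω' ∂μ)) μ :=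
    fun s t => (hAi s).mul_const _
  have i2 : ∀ s t, Integrable (fun ω => (∫ ω', A s ω' ∂μ) * (starRingEnd ℂ) (B t ω)) μ :=
    fun s t => (hBi t).const_mul _
  have i3 : ∀ s t, Integrable (fun ω => (A s ω * (starRingEnd ℂ) (B t ω)
        - A s ω * (starRingEnd ℂ) (∫ ω', B t ω' ∂μ)
        - ((∫ ω', A s ω' ∂μ) * (starRingEnd ℂ) (B t ω)
          - (∫ ω', A s ω' ∂μ) * (starRingEnd ℂ) (∫ ω', B t ω' ∂μ)))) μ := fun s t =>
    ((hABi s t).sub (i1 s t)).sub ((i2 s t).sub (integrable_const _))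
  simp only [e1]
  refine ⟨Integrable.const_mul (integrable_finsetSum _ fun s _ =>
    integrable_finsetSum _ fun t _ => i3 s t) _, ?_⟩
  rw [integral_const_mul, integral_finsetSum _ fun s _ => integrable_finsetSum _ fun t _ => i3 s t]
  congr 1
  refine Finset.sum_congr rfl fun s _ => ?_
  rw [integral_finsetSum _ fun t _ => i3 s t]
  have i4 : ∀ t, ∫ ω, (A s ω * (starRingEnd ℂ) (B t ω)
        - A s ω * (starRingEnd ℂ) (∫ ω', B t ω' ∂μ)
        - ((∫ ω', A s ω' ∂μ) * (starRingEnd ℂ) (B t ω)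
          - (∫ ω', A s ω' ∂μ) * (starRingEnd ℂ) (∫ ω', B t ω' ∂μ))) ∂μ
      = (∫ ω, A s ω * (starRingEnd ℂ) (B t ω) ∂μ)
        - (∫ ω, A s ω ∂μ) * (starRingEnd ℂ) (∫ ω, B t ω ∂μ) := by
    intro t
    have i5 : Integrable (fun ω => A s ω * (starRingEnd ℂ) (B t ω)
        - A s ω * (starRingEnd ℂ) (∫ ω', B t ω' ∂μ)) μ := (hABi s t).sub (i1 s t)
    have i6 : Integrable (fun ω => (∫ ω', A s ω' ∂μ) * (starRingEnd ℂ) (B t ω)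
          - (∫ ω', A s ω' ∂μ) * (starRingEnd ℂ) (∫ ω', B t ω' ∂μ)) μ :=
      (i2 s t).sub (integrable_const _)
    rw [integral_sub i5 i6,
      integral_sub (hABi s t) (i1 s t), integral_sub (i2 s t) (integrable_const _),
      integral_mul_const, integral_const_mul, integral_const, integral_conj]
    simp
  simp only [i4]
  refine Finset.sum_eq_single s (fun t _ hts => ?_) (by simp)
  have := (hAB s t hts.symm).comp (φ := id) (ψ := starRingEnd ℂ) measurable_id
    Complex.continuous_conj.measurable
  have h2 := this.integral_fun_mul_eq_mul_integral (by exact (hAi s).aestronglyMeasurable)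
    (by exact (hBi t).aestronglyMeasurable)
  simp only [Function.comp, id] at h2
  rw [h2, integral_conj, sub_self]

lemma entry_bound {Ω : Type*} [MeasurableSpace Ω] {μ : Measure Ω} [IsProbabilityMeasure μ]
    {n : ℕ} {K K' β : ℝ} (hK : 0 < K) (hK' : 0 < K')
    (hL : 0 < Real.log n ^ max (β / 2) 2)
    {η : Matrix (Fin n) (Fin n) ℝ} {W : Ω → Matrix (Fin n) (Fin n) ℂ}
    (h : PaperAssumptions μ n K K' β η W) (p q : Fin n × Fin n) :
    ‖∑ r : Fin n × Fin n, ((∫ ω, (W ω p.1 r.1 * (starRingEnd ℂ) (W ω p.2 r.2))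
          * (starRingEnd ℂ) (W ω q.1 r.1 * (starRingEnd ℂ) (W ω q.2 r.2)) ∂μ)
        - (∫ ω, W ω p.1 r.1 * (starRingEnd ℂ) (W ω p.2 r.2) ∂μ)
          * (starRingEnd ℂ) (∫ ω, W ω q.1 r.1 * (starRingEnd ℂ) (W ω q.2 r.2) ∂μ))‖
      ≤ (if q = p then 1 + (K * 2 ^ β) ^ 2 * (K' / Real.log n ^ max (β / 2) 2) else 0)
        + (if q = p.swap then K' / Real.log n ^ max (β / 2) 2 else 0) := by
  set M := K' / Real.log n ^ max (β / 2) 2 with hM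
  have hM0 : 0 < M := div_pos hK' hL
  set Q := (K * (2 : ℝ) ^ β) ^ 2 with hQ
  have hQ0 : 0 ≤ Q := sq_nonneg _
  have hη0 : ∀ i j, 0 ≤ η i j := fun i j => by
    rw [← h.entries_variance i j]; exact integral_nonneg fun _ => by positivity
  have h4 : ∀ i j, ∫ ω, ‖W ω i j‖ ^ 4 ∂μ ≤ Q * η i j ^ 2 := by
    intro i j
    have h1 := h.moment_growth 2 (by norm_num) i j
    have h0 : 0 ≤ ∫ ω, ‖W ω i j‖ ^ 4 ∂μ := integral_nonneg fun _ => by positivity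
    norm_num at h1
    rw [← Real.sqrt_eq_rpow] at h1
    calc _ = (Real.sqrt (∫ ω, ‖W ω i j‖ ^ 4 ∂μ)) ^ 2 := (Real.sq_sqrt h0).symm
      _ ≤ (K * 2 ^ β * η i j) ^ 2 := by gcongr
      _ = _ := by rw [hQ]; ring
  have hsumsq : ∀ i i', ∑ j, η i j * η i' j ≤ M := by
    intro i i'
    calc ∑ j, η i j * η i' j ≤ ∑ j, M * η i' j := by
          gcongr with j _
          · exact hη0 _ _
          · exact h.max_variance i j
      _ = M * ∑ j, η i' j := by rw [Finset.mul_sum]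
      _ ≤ M * 1 := by gcongr; exact h.row_sums i'
      _ = M := mul_one M
  have key : ∀ r : Fin n × Fin n, ‖((∫ ω, (W ω p.1 r.1 * (starRingEnd ℂ) (W ω p.2 r.2))
          * (starRingEnd ℂ) (W ω q.1 r.1 * (starRingEnd ℂ) (W ω q.2 r.2)) ∂μ)
        - (∫ ω, W ω p.1 r.1 * (starRingEnd ℂ) (W ω p.2 r.2) ∂μ)
          * (starRingEnd ℂ) (∫ ω, W ω q.1 r.1 * (starRingEnd ℂ) (W ω q.2 r.2) ∂μ))‖
      ≤ (if q = p then η p.1 r.1 * η p.2 r.2 + (if r.1 = r.2 then Q * (η p.1 r.1 * η p.1 r.1) else 0)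
          else 0) + (if q = p.swap then (if r.1 = r.2 then η p.1 r.1 * η p.2 r.1 else 0) else 0) := by
    intro r
    have := cov4_bound (ξ := fun (a : Fin n × Fin n) ω => W ω a.1 a.2) h.entries_indep
      (fun a k => h.entries_memLp a.1 a.2 k) (fun a => h.entries_centered a.1 a.2)
      (fun a => η a.1 a.2) (fun a => h.entries_variance a.1 a.2) Q (fun a => h4 a.1 a.2)
      (p.1, r.1) (p.2, r.2) (q.1, r.1) (q.2, r.2)
    refine this.trans ?_
    obtain ⟨i, i'⟩ := p
    obtain ⟨k, k'⟩ := q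
    obtain ⟨j, j'⟩ := r
    have a1 := mul_nonneg (hη0 i j) (hη0 i' j')
    have a2 := mul_nonneg hQ0 (mul_nonneg (hη0 i j) (hη0 i j))
    have a3 := mul_nonneg (hη0 i j) (hη0 i' j)
    simp only [Prod.mk.injEq, Prod.swap_prod_mk, and_true]
    by_cases c1 : i = k ∧ i' = k'
    · obtain ⟨rfl, rfl⟩ := c1
      simp only [and_self, if_true]
      rw [add_assoc]
      gcongr
      simp only [pow_two]
      split_ifs <;> first | linarith | (exfalso; tauto)
    · have c2 : ¬ (k = i ∧ k' = i') := by grind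
      simp only [c1, c2, if_false, zero_add]
      by_cases c3 : (i = k' ∧ j = j') ∧ i' = k ∧ j' = j
      · obtain ⟨⟨rfl, rfl⟩, rfl, -⟩ := c3
        simp
      · simp only [c3, if_false]
        split_ifs <;> first | exact le_rfl | exact a3
  refine (norm_sum_le _ _).trans ((Finset.sum_le_sum fun r _ => key r).trans ?_)
  rw [Finset.sum_add_distrib]
  refine add_le_add ?_ ?_
  · split_ifs
    · rw [Finset.sum_add_distrib]
      refine add_le_add ?_ ?_
      · rw [Fintype.sum_prod_type, ← Finset.sum_mul_sum]
        exact mul_le_one₀ (h.row_sums _) (Finset.sum_nonneg fun _ _ => hη0 _ _) (h.row_sums _)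
      · rw [Fintype.sum_prod_type]
        simp only [Finset.sum_ite_eq, Finset.mem_univ, if_true]
        rw [← Finset.mul_sum]
        gcongr
        exact hsumsq _ _
    · simp
  · split_ifs
    · rw [Fintype.sum_prod_type]
      simp only [Finset.sum_ite_eq, Finset.mem_univ, if_true]
      exact hsumsq _ _
    · simp

lemma measurable_entry {n : ℕ} (i j : Fin n) :
    Measurable (fun M : Matrix (Fin n) (Fin n) ℂ => M i j) :=
  (measurable_pi_apply j).comp (measurable_pi_apply (X := fun _ : Fin n => Fin n → ℂ) i)

lemma half_bound {Ω : Type*} [MeasurableSpace Ω] {μ : Measure Ω} [IsProbabilityMeasure μ]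
    {n d : ℕ} {K K' β : ℝ} (hK : 0 < K) (hK' : 0 < K') (hn : 2 ≤ n)
    {η : Matrix (Fin n) (Fin n) ℝ} {W : Ω → Matrix (Fin n) (Fin n) ℂ}
    {Ws : Fin d → Ω → Matrix (Fin n) (Fin n) ℂ}
    (h : PaperAssumptions μ n K K' β η W) (hi : iIndepFun Ws μ)
    (hd : ∀ s, IdentDistrib (Ws s) W μ μ)
    (X : Ω → Matrix (Fin n × Fin n) (Fin n × Fin n) ℂ)
    (hX : X = (fun ω => (d : ℂ)⁻¹ • ∑ s,
            (Ws s ω ⊗ₖ (Ws s ω).map (starRingEnd ℂ)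
              - matExp μ fun ω' => Ws s ω' ⊗ₖ (Ws s ω').map (starRingEnd ℂ)))) :
    Matrix.opNorm2 (matExp μ fun ω => X ω * (X ω)ᴴ)
          ≤ (1 / d) * (1 + (((K * 2 ^ β) ^ 2 + 1) * K') / Real.log n ^ max (β / 2) 2) := by
  have hL : 0 < Real.log n ^ max (β / 2) 2 :=
    Real.rpow_pos_of_pos (Real.log_pos (by exact_mod_cast hn)) _
  set c : Fin n × Fin n → Fin n × Fin n → ℂ := fun p q =>
    ∑ r : Fin n × Fin n, ((∫ ω, (W ω p.1 r.1 * (starRingEnd ℂ) (W ω p.2 r.2))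
          * (starRingEnd ℂ) (W ω q.1 r.1 * (starRingEnd ℂ) (W ω q.2 r.2)) ∂μ)
        - (∫ ω, W ω p.1 r.1 * (starRingEnd ℂ) (W ω p.2 r.2) ∂μ)
          * (starRingEnd ℂ) (∫ ω, W ω q.1 r.1 * (starRingEnd ℂ) (W ω q.2 r.2) ∂μ)) with hc
  have hV : ∀ p r : Fin n × Fin n, Measurable (fun M : Matrix (Fin n) (Fin n) ℂ =>
      M p.1 r.1 * (starRingEnd ℂ) (M p.2 r.2)) := fun p r =>
    (measurable_entry _ _).mul (Complex.continuous_conj.measurable.comp (measurable_entry _ _))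
  have hWs : ∀ s i j (k : ℕ), MemLp (fun ω => Ws s ω i j) k μ := fun s i j k =>
    ((hd s).comp (measurable_entry i j)).memLp_iff.2 (h.entries_memLp i j k)
  have hent : ∀ p q, (matExp μ fun ω => X ω * (X ω)ᴴ) p q = (d : ℂ)⁻¹ * c p q := by
    intro p q
    have hVL : ∀ (p r : Fin n × Fin n) s (k : ℕ),
        MemLp (fun ω => Ws s ω p.1 r.1 * (starRingEnd ℂ) (Ws s ω p.2 r.2)) k μ :=
      fun p r s => memLp_mul_all (hWs s _ _) (memLp_conj_all (hWs s _ _))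
    have hcs := fun r : Fin n × Fin n => cov_sum
      (fun s ω => Ws s ω p.1 r.1 * (starRingEnd ℂ) (Ws s ω p.2 r.2))
      (fun s ω => Ws s ω q.1 r.1 * (starRingEnd ℂ) (Ws s ω q.2 r.2))
      (hVL p r) (hVL q r)
      (fun s t hst => (hi.indepFun hst).comp (hV p r) (hV q r)) (d : ℂ)⁻¹
    have e0 : (matExp μ fun ω => X ω * (X ω)ᴴ) p q = ∫ ω, ∑ r : Fin n × Fin n,
        ((d : ℂ)⁻¹ * ∑ s, (Ws s ω p.1 r.1 * (starRingEnd ℂ) (Ws s ω p.2 r.2)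
          - ∫ ω', Ws s ω' p.1 r.1 * (starRingEnd ℂ) (Ws s ω' p.2 r.2) ∂μ))
        * (starRingEnd ℂ) ((d : ℂ)⁻¹ * ∑ s, (Ws s ω q.1 r.1 * (starRingEnd ℂ) (Ws s ω q.2 r.2)
          - ∫ ω', Ws s ω' q.1 r.1 * (starRingEnd ℂ) (Ws s ω' q.2 r.2) ∂μ)) ∂μ := by
      have hXe : ∀ ω p r, X ω p r = (d : ℂ)⁻¹ * ∑ s, (Ws s ω p.1 r.1 * (starRingEnd ℂ) (Ws s ω p.2 r.2)
          - ∫ ω', Ws s ω' p.1 r.1 * (starRingEnd ℂ) (Ws s ω' p.2 r.2) ∂μ) := by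
        intro ω p r
        rw [hX]
        simp only [Matrix.smul_apply, Matrix.sum_apply, Matrix.sub_apply, matExp, Matrix.of_apply,
          Matrix.kroneckerMap_apply, Matrix.map_apply, smul_eq_mul]
      simp only [← hXe]
      rfl
    rw [e0, integral_finsetSum _ fun r _ => (hcs r).1]
    simp only [fun r => (hcs r).2]
    have e1 : ∀ r : Fin n × Fin n, ∀ s, ((∫ ω, Ws s ω p.1 r.1 * (starRingEnd ℂ) (Ws s ω p.2 r.2)
          * (starRingEnd ℂ) (Ws s ω q.1 r.1 * (starRingEnd ℂ) (Ws s ω q.2 r.2)) ∂μ)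
        - (∫ ω, Ws s ω p.1 r.1 * (starRingEnd ℂ) (Ws s ω p.2 r.2) ∂μ)
          * (starRingEnd ℂ) (∫ ω, Ws s ω q.1 r.1 * (starRingEnd ℂ) (Ws s ω q.2 r.2) ∂μ))
        = ((∫ ω, W ω p.1 r.1 * (starRingEnd ℂ) (W ω p.2 r.2)
          * (starRingEnd ℂ) (W ω q.1 r.1 * (starRingEnd ℂ) (W ω q.2 r.2)) ∂μ)
        - (∫ ω, W ω p.1 r.1 * (starRingEnd ℂ) (W ω p.2 r.2) ∂μ)
          * (starRingEnd ℂ) (∫ ω, W ω q.1 r.1 * (starRingEnd ℂ) (W ω q.2 r.2) ∂μ)) := by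
      intro r s
      have f1 := ((hd s).comp (hV p r)).integral_eq
      have f2 := ((hd s).comp (hV q r)).integral_eq
      have f3 := ((hd s).comp ((hV p r).mul
        (Complex.continuous_conj.measurable.comp (hV q r)))).integral_eq
      simp only [Function.comp_def, Pi.mul_apply] at f1 f2 f3
      rw [f1, f2]
      congr 1
    simp only [e1, Finset.sum_const, Finset.card_univ, Fintype.card_fin, nsmul_eq_mul]
    rw [← Finset.mul_sum, ← Finset.mul_sum]
    change _ * (_ * c p q) = _
    rcases Nat.eq_zero_or_pos d with rfl | hd0
    · simp
    · have : (d : ℂ) ≠ 0 := by exact_mod_cast hd0.ne'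
      simp only [map_inv₀, Complex.conj_natCast]
      field_simp
  have hb := entry_bound hK hK' hL h
  have hM0 : 0 < K' / Real.log n ^ max (β / 2) 2 := div_pos hK' hL
  set b1 : ℝ := 1 + (K * 2 ^ β) ^ 2 * (K' / Real.log n ^ max (β / 2) 2) with hb1
  set b2 : ℝ := K' / Real.log n ^ max (β / 2) 2 with hb2
  have e2 : (1 / (d : ℝ)) * (1 + (((K * 2 ^ β) ^ 2 + 1) * K') / Real.log n ^ max (β / 2) 2)
      = (1 / d) * (b1 + b2) := by
    rw [hb1, hb2]; ring
  have hb10 : 0 ≤ b1 := by positivity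
  rw [e2]
  have hnorm : ∀ p q, ‖(matExp μ fun ω => X ω * (X ω)ᴴ) p q‖
      ≤ 1 / d * ((if q = p then b1 else 0) + (if q = p.swap then b2 else 0)) := by
    intro p q
    rw [hent, norm_mul, norm_inv, Complex.norm_natCast, one_div]
    gcongr
    exact hb p q
  refine opNorm2_le_schur _ _ (by positivity) (fun p => ?_) (fun q => ?_)
  · refine (Finset.sum_le_sum fun q _ => hnorm p q).trans_eq ?_
    rw [← Finset.mul_sum, Finset.sum_add_distrib]
    simp
  · refine (Finset.sum_le_sum fun p _ => hnorm p q).trans_eq ?_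
    rw [← Finset.mul_sum, Finset.sum_add_distrib]
    have : ∀ p : Fin n × Fin n, q = p.swap ↔ q.swap = p := fun p => by
      constructor <;> rintro rfl <;> simp
    simp [this]

lemma assumptions_conjTranspose {Ω : Type*} [MeasurableSpace Ω] {μ : Measure Ω}
    [IsProbabilityMeasure μ] {n : ℕ} {K K' β : ℝ}
    {η : Matrix (Fin n) (Fin n) ℝ} {W : Ω → Matrix (Fin n) (Fin n) ℂ}
    (h : PaperAssumptions μ n K K' β η W) :
    PaperAssumptions μ n K K' β ηᵀ (fun ω => (W ω)ᴴ) where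
  entries_indep := by
    have h1 := h.entries_indep.precomp (Prod.swap_injective (α := Fin n) (β := Fin n))
    exact h1.comp (fun _ => starRingEnd ℂ) (fun _ => Complex.continuous_conj.measurable)
  entries_memLp i j p := memLp_conj_all (fun p => h.entries_memLp j i p) p
  entries_centered i j := by
    have : ∫ ω, (starRingEnd ℂ) (W ω j i) ∂μ = 0 := by
      rw [integral_conj, h.entries_centered]; simp
    exact this
  entries_variance i j := by simpa using h.entries_variance j i
  row_sums i := h.col_sums i
  col_sums j := h.row_sums j
  moment_growth p hp i j := by simpa using h.moment_growth p hp j i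
  max_variance i j := h.max_variance j i

lemma measurable_conjTranspose {n : ℕ} :
    Measurable (fun M : Matrix (Fin n) (Fin n) ℂ => Mᴴ) :=
  measurable_pi_lambda _ fun i => measurable_pi_lambda _ fun j =>
    Complex.continuous_conj.measurable.comp (measurable_entry j i)

/-- Lemma 2.6 of the paper: for `X = (1/d) ∑_s (W_s ⊗ conj(W_s) − E(W_s ⊗ conj(W_s)))` with
`W_1, …, W_d` independent copies of a random matrix `W` satisfying Assumptions 1–4,
`‖E(XX*)‖ , ‖E(X*X)‖ ≤ (1/d)(1 + C_β/(log n)^{α_β})`, where `C_β > 0` depends only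
on `β, K, K'` and `α_β = max (β/2) 2`. -/
theorem sigma_param_bound :
    ∀ K K' β : ℝ, 0 < K → 0 < K' → 0 ≤ β →
    ∃ Cβ : ℝ, 0 < Cβ ∧
    ∀ n d : ℕ, 2 ≤ n → d ≤ n ^ 2 →
    ∀ (Ω : Type) (_ : MeasurableSpace Ω) (μ : Measure Ω), IsProbabilityMeasure μ →
    ∀ (η : Matrix (Fin n) (Fin n) ℝ) (W : Ω → Matrix (Fin n) (Fin n) ℂ)
      (Ws : Fin d → Ω → Matrix (Fin n) (Fin n) ℂ),
      PaperAssumptions μ n K K' β η W →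
      iIndepFun Ws μ →
      (∀ s, IdentDistrib (Ws s) W μ μ) →
      ∀ X : Ω → Matrix (Fin n × Fin n) (Fin n × Fin n) ℂ,
      X = (fun ω => (d : ℂ)⁻¹ • ∑ s,
            (Ws s ω ⊗ₖ (Ws s ω).map (starRingEnd ℂ)
              - matExp μ fun ω' => Ws s ω' ⊗ₖ (Ws s ω').map (starRingEnd ℂ))) →
      Matrix.opNorm2 (matExp μ fun ω => X ω * (X ω)ᴴ)
          ≤ (1 / d) * (1 + Cβ / Real.log n ^ max (β / 2) 2)
        ∧ Matrix.opNorm2 (matExp μ fun ω => (X ω)ᴴ * X ω)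
          ≤ (1 / d) * (1 + Cβ / Real.log n ^ max (β / 2) 2) := by
  intro K K' β hK hK' hβ
  refine ⟨((K * 2 ^ β) ^ 2 + 1) * K', by positivity, ?_⟩
  intro n d hn hdn Ω mΩ μ hμ η W Ws h hi hd X hX
  refine ⟨half_bound hK hK' hn h hi hd X hX, ?_⟩
  have := half_bound hK hK' hn (assumptions_conjTranspose h)
    (hi.comp (fun _ M => Mᴴ) (fun _ => measurable_conjTranspose))
    (fun s => (hd s).comp measurable_conjTranspose) (fun ω => (X ω)ᴴ) ?_
  · simpa only [Matrix.conjTranspose_conjTranspose] using this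
  · funext ω
    ext p r
    rw [hX]
    simp only [Matrix.conjTranspose_apply, Matrix.smul_apply, Matrix.sum_apply, Matrix.sub_apply,
      matExp, Matrix.of_apply, Matrix.kroneckerMap_apply, Matrix.map_apply, smul_eq_mul,
      Function.comp, star_mul', star_sum, star_sub, star_inv₀, star_natCast]
    congr 1
    refine Finset.sum_congr rfl fun s _ => ?_
    congr 1
    exact (integral_conj (f := fun ω' => Ws s ω' r.1 p.1 * (starRingEnd ℂ) (Ws s ω' r.2 p.2))).symm.trans
      (by simp)
end

section
/- For all constants K, K' > 0 and β ≥ 0 there exists a constant C_β > 0 (depending only on β, K, K') such that the following holds. Let n, d ∈ ℕ with n ≥ 2 and d ≤ n², let W satisfy Assumptions 1–4 with constants K, K', β, let W_1,…,W_d be independent copies of W, and set X = (1/d) ∑_{s=1}^d ( W_s ⊗ conj(W_s) − E(W_s ⊗ conj(W_s)) ). Then ‖Cov(X)‖ ≤ (1/d) · C_β/(log n)^{2α_β}, where Cov(X) is the n⁴ × n⁴ matrix with entries Cov(X)_{(a,b),(c,e)} = E(X_{ab} · conj(X_{ce})) for indices a,b,c,e ∈ {1,…,n²} (note E(X) = 0),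 and α_β = max(β/2, 2). -/
open MeasureTheory ProbabilityTheory Matrix
open scoped Kronecker ENNReal

lemma opNorm2_le_of_sparse {ι : Type*} [Fintype ι] [DecidableEq ι] (A : Matrix ι ι ℂ)
    (σ : Equiv.Perm ι) (M : ℝ) (hM : 0 ≤ M)
    (hA : ∀ p q, q ≠ p → q ≠ σ p → A p q = 0) (hb : ∀ p q, ‖A p q‖ ≤ M) :
    Matrix.opNorm2 A ≤ 2 * M := by
  unfold Matrix.opNorm2
  refine ContinuousLinearMap.opNorm_le_bound _ (by positivity) fun v => ?_
  have hrow : ∀ p, ‖(A *ᵥ v.ofLp) p‖ ^ 2 ≤ 2 * M ^ 2 * (‖v p‖ ^ 2 + ‖v (σ p)‖ ^ 2) := by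
    intro p
    have h1 : ‖(A *ᵥ v.ofLp) p‖ ≤ M * ‖v p‖ + M * ‖v (σ p)‖ := by
      simp only [Matrix.mulVec, dotProduct]
      refine (norm_sum_le _ _).trans ?_
      have : ∀ q ∈ Finset.univ, ‖A p q * v q‖ ≤
          (if q = p then M * ‖v p‖ else 0) + (if q = σ p then M * ‖v (σ p)‖ else 0) := by
        intro q _
        rw [norm_mul]
        have := mul_le_mul_of_nonneg_right (hb p q) (norm_nonneg (v q))
        have h0 := mul_nonneg hM (norm_nonneg (v q))
        by_cases h1 : q = p
        · subst h1
          have h0' := mul_nonneg hM (norm_nonneg (v (σ q)))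
          rw [if_pos rfl]
          split_ifs <;> linarith
        · by_cases h2 : q = σ p
          · rw [if_neg h1, if_pos h2, zero_add, ← h2]
            exact this
          · simp [h1, h2, hA p q h1 h2]
      refine (Finset.sum_le_sum this).trans ?_
      rw [Finset.sum_add_distrib]
      simp
    have h2 := pow_le_pow_left₀ (norm_nonneg _) h1 2
    refine h2.trans ?_
    nlinarith [mul_nonneg (sq_nonneg M) (sq_nonneg (‖v p‖ - ‖v (σ p)‖))]
  have : ‖(LinearMap.toContinuousLinearMap (Matrix.toEuclideanLin A)) v‖ ^ 2
      ≤ (2 * M * ‖v‖) ^ 2 := by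
    rw [mul_pow, EuclideanSpace.norm_sq_eq, EuclideanSpace.norm_sq_eq]
    have e : ∀ p, ((LinearMap.toContinuousLinearMap (Matrix.toEuclideanLin A)) v).ofLp p
      = (A *ᵥ v.ofLp) p := fun p => rfl
    simp only [e]
    refine (Finset.sum_le_sum fun p _ => hrow p).trans ?_
    rw [← Finset.mul_sum, Finset.sum_add_distrib, Equiv.sum_comp σ (fun p => ‖v p‖ ^ 2)]
    apply le_of_eq; ring
  exact le_of_sq_le_sq this (by positivity) 

lemma integral_isolated {Ω ι : Type*} [MeasurableSpace Ω] {μ : Measure Ω} [DecidableEq ι]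
    {w : ι → Ω → ℂ} (hi : iIndepFun w μ) (hm : ∀ i, AEMeasurable (w i) μ)
    (a : ι) (S : Finset ι) (ha : a ∉ S) (G : ℂ → ℂ) (hG : Measurable G)
    (F : (S → ℂ) → ℂ) (hF : Measurable F) (h0 : ∫ ω, G (w a ω) ∂μ = 0) :
    ∫ ω, G (w a ω) * F (fun i : S => w i ω) ∂μ = 0 := by
  have h := hi.indepFun_finset₀ {a} S (by simpa using ha) hm
  have h2 : IndepFun (w a) (fun ω (i : S) => w i ω) μ :=
    h.comp (φ := fun x : (({a} : Finset ι) → ℂ) => x ⟨a, Finset.mem_singleton_self a⟩)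
      (ψ := id) (measurable_pi_apply _) measurable_id
  rw [h2.integral_fun_comp_mul_comp (hm a) (aemeasurable_pi_lambda _ fun i => hm i)
    hG.aestronglyMeasurable hF.aestronglyMeasurable, h0, zero_mul]

local notation "cj" => starRingEnd ℂ

lemma cov_zero {Ω ι : Type*} [MeasurableSpace Ω] {μ : Measure Ω} [DecidableEq ι]
    {w : ι → Ω → ℂ} (hi : iIndepFun w μ) (hm : ∀ i, AEMeasurable (w i) μ)
    (hc : ∀ i, ∫ ω, w i ω ∂μ = 0) (e f g h : ι)
    (h1 : ¬ (g = e ∧ h = f)) (h2 : ¬ (g = f ∧ h = e)) :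
    ∫ ω, (w e ω * cj (w f ω)) * cj (w g ω * cj (w h ω)) ∂μ
      - (∫ ω, w e ω * cj (w f ω) ∂μ) * cj (∫ ω, w g ω * cj (w h ω) ∂μ) = 0 := by
  have hcc : ∀ i, ∫ ω, cj (w i ω) ∂μ = 0 := fun i => by rw [integral_conj, hc, map_zero]
  have hcj : Measurable (fun z : ℂ => cj z) := Complex.continuous_conj.measurable
  have pair : ∀ a b, a ≠ b → ∫ ω, w a ω * cj (w b ω) ∂μ = 0 := by
    intro a b hab
    exact integral_isolated hi hm a {b} (by simpa using hab) id measurable_id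
      (fun x => cj (x ⟨b, by simp⟩)) (hcj.comp (measurable_pi_apply _)) (hc a)
  have iso : ∀ a b c d, a ≠ b → a ≠ c → a ≠ d →
      ∫ ω, w a ω * (cj (w b ω) * cj (w c ω) * w d ω) ∂μ = 0 := by
    intro a b c d hab hac had
    exact integral_isolated hi hm a {b, c, d} (by simp [*]) id measurable_id
      (fun x => cj (x ⟨b, by simp⟩) * cj (x ⟨c, by simp⟩) * x ⟨d, by simp⟩)
      (((hcj.comp (measurable_pi_apply _)).mul (hcj.comp (measurable_pi_apply _))).mul
        (measurable_pi_apply _)) (hc a)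
  have iso' : ∀ a b c d, a ≠ b → a ≠ c → a ≠ d →
      ∫ ω, cj (w a ω) * (w b ω * w c ω * cj (w d ω)) ∂μ = 0 := by
    intro a b c d hab hac had
    have := congrArg cj (iso a b c d hab hac had)
    rw [← integral_conj, map_zero] at this
    simpa using this
  have isoE : e ≠ f → e ≠ g → e ≠ h →
      ∫ ω, (w e ω * cj (w f ω)) * cj (w g ω * cj (w h ω)) ∂μ = 0 := by
    intro a b c
    rw [← iso e f g h a b c]; congr 1; ext ω; simp; ring
  have isoH : h ≠ f → h ≠ g → h ≠ e →
      ∫ ω, (w e ω * cj (w f ω)) * cj (w g ω * cj (w h ω)) ∂μ = 0 := by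
    intro a b c
    rw [← iso h f g e a b c]; congr 1; ext ω; simp; ring
  have isoF : f ≠ e → f ≠ h → f ≠ g →
      ∫ ω, (w e ω * cj (w f ω)) * cj (w g ω * cj (w h ω)) ∂μ = 0 := by
    intro a b c
    rw [← iso' f e h g a b c]; congr 1; ext ω; simp; ring
  have isoG : g ≠ e → g ≠ h → g ≠ f →
      ∫ ω, (w e ω * cj (w f ω)) * cj (w g ω * cj (w h ω)) ∂μ = 0 := by
    intro a b c
    rw [← iso' g e h f a b c]; congr 1; ext ω; simp; ring
  by_cases ef : e = f
  · by_cases gh : g = h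
    · subst ef gh
      have hge : e ≠ g := fun h => h1 ⟨h.symm, h.symm⟩
      have hmm : Measurable (fun z : ℂ => z * cj z) := measurable_id.mul hcj
      have hmm' : Measurable (fun z : ℂ => cj (z * cj z)) := hcj.comp hmm
      rw [(hi.indepFun hge).integral_fun_comp_mul_comp (f := fun z => z * cj z)
        (g := fun z => cj (z * cj z)) (hm e) (hm g) hmm.aestronglyMeasurable
        hmm'.aestronglyMeasurable, ← integral_conj, sub_self]
    · rw [pair g h gh, map_zero, mul_zero, sub_zero]
      subst ef
      by_cases he : h = e
      · exact isoG (fun x => gh (x.trans he.symm)) gh (fun x => gh (x.trans he.symm))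
      · exact isoH he (Ne.symm gh) he
  · rw [pair e f ef, zero_mul, sub_zero]
    by_cases eg : e = g
    · have hf : f ≠ h := fun x => h1 ⟨eg.symm, x.symm⟩
      exact isoF (Ne.symm ef) hf (fun x => ef (eg.trans x.symm))
    · by_cases eh : e = h
      · have hf : f ≠ g := fun x => h2 ⟨x.symm, eh.symm⟩
        exact isoF (Ne.symm ef) (fun x => ef (eh.trans x.symm)) hf
      · exact isoE ef eg eh

lemma cov_bound {Ω ι : Type*} [MeasurableSpace Ω] {μ : Measure Ω} [DecidableEq ι]
    {w : ι → Ω → ℂ} (hi : iIndepFun w μ) (hm : ∀ i, AEMeasurable (w i) μ)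
    (hc : ∀ i, ∫ ω, w i ω ∂μ = 0) (η : ι → ℝ) (B L : ℝ) (hB : 0 ≤ B)
    (h2 : ∀ i, ∫ ω, ‖w i ω‖ ^ 2 ∂μ = η i)
    (h4 : ∀ i, ∫ ω, ‖w i ω‖ ^ 4 ∂μ ≤ B * η i ^ 2) (hL : ∀ i, η i ≤ L)
    (e f g h : ι) :
    ‖∫ ω, (w e ω * cj (w f ω)) * cj (w g ω * cj (w h ω)) ∂μ
      - (∫ ω, w e ω * cj (w f ω) ∂μ) * cj (∫ ω, w g ω * cj (w h ω) ∂μ)‖ ≤ (1 + B) * L ^ 2 := by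
  have hη : ∀ i, 0 ≤ η i := fun i => by
    rw [← h2 i]; exact integral_nonneg fun ω => by positivity
  have hL0 : 0 ≤ L := (hη e).trans (hL e)
  by_cases hgh : (g = e ∧ h = f) ∨ (g = f ∧ h = e)
  swap
  · push Not at hgh
    rw [cov_zero hi hm hc e f g h (fun x => hgh.1 x.1 x.2) (fun x => hgh.2 x.1 x.2), norm_zero]
    positivity
  have hn : ∀ ω, ‖(w e ω * cj (w f ω)) * cj (w g ω * cj (w h ω))‖
      = ‖w e ω‖ ^ 2 * ‖w f ω‖ ^ 2 := by
    intro ω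
    simp only [norm_mul, RCLike.norm_conj]
    rcases hgh with ⟨rfl, rfl⟩ | ⟨rfl, rfl⟩ <;> ring
  have hI : ‖∫ ω, (w e ω * cj (w f ω)) * cj (w g ω * cj (w h ω)) ∂μ‖
      ≤ ∫ ω, ‖w e ω‖ ^ 2 * ‖w f ω‖ ^ 2 ∂μ := by
    refine (norm_integral_le_integral_norm _).trans (le_of_eq ?_)
    simp only [hn]
  have hcj : Measurable (fun z : ℂ => cj z) := Complex.continuous_conj.measurable
  have pair : ∀ a b, a ≠ b → ∫ ω, w a ω * cj (w b ω) ∂μ = 0 := by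
    intro a b hab
    exact integral_isolated hi hm a {b} (by simpa using hab) id measurable_id
      (fun x => cj (x ⟨b, by simp⟩)) (hcj.comp (measurable_pi_apply _)) (hc a)
  have hsq : Measurable (fun z : ℂ => ‖z‖ ^ 2) := by fun_prop
  have hLe : ∀ i, η i ^ 2 ≤ L ^ 2 := fun i => pow_le_pow_left₀ (hη i) (hL i) 2
  by_cases ef : e = f
  · subst ef
    have hge : g = e := by tauto
    have hhe : h = e := by tauto
    have hn2 : ‖∫ ω, w e ω * cj (w e ω) ∂μ‖ ≤ η e := by
      refine (norm_integral_le_integral_norm _).trans (le_of_eq ?_)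
      rw [← h2 e]; congr 1; ext ω; simp [sq]
    have hI4 : ∫ ω, ‖w e ω‖ ^ 2 * ‖w e ω‖ ^ 2 ∂μ = ∫ ω, ‖w e ω‖ ^ 4 ∂μ := by
      congr 1; ext ω; ring
    refine (norm_sub_le _ _).trans ?_
    have h3 : ‖(∫ ω, w e ω * cj (w e ω) ∂μ) * cj (∫ ω, w g ω * cj (w h ω) ∂μ)‖ ≤ η e ^ 2 := by
      rw [norm_mul, RCLike.norm_conj, hge, hhe, sq]
      exact mul_le_mul hn2 hn2 (norm_nonneg _) (hη e)
    have := h4 e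
    have := mul_le_mul_of_nonneg_left (hLe e) hB
    linarith [hLe e]
  · rw [pair e f ef, zero_mul, sub_zero]
    refine hI.trans ?_
    rw [(hi.indepFun ef).integral_fun_comp_mul_comp (f := fun z => ‖z‖ ^ 2)
        (g := fun z => ‖z‖ ^ 2) (hm e) (hm f) hsq.aestronglyMeasurable
        hsq.aestronglyMeasurable, h2, h2]
    have := mul_le_mul (hL e) (hL f) (hη f) hL0
    nlinarith [mul_nonneg hB (sq_nonneg L)]

lemma cov_average {Ω 𝓧 : Type*} [MeasurableSpace Ω] [MeasurableSpace 𝓧] {μ : Measure Ω}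
    [IsProbabilityMeasure μ] {d : ℕ} (Ws : Fin d → Ω → 𝓧) (W : Ω → 𝓧)
    (hi : iIndepFun Ws μ) (hid : ∀ s, IdentDistrib (Ws s) W μ μ) (φ ψ : 𝓧 → ℂ)
    (hφ : Measurable φ) (hψ : Measurable ψ)
    (hφ2 : MemLp (fun ω => φ (W ω)) 2 μ) (hψ2 : MemLp (fun ω => ψ (W ω)) 2 μ) :
    ∫ ω, ((d : ℂ)⁻¹ * ∑ s, (φ (Ws s ω) - ∫ ω', φ (Ws s ω') ∂μ)) *
      cj ((d : ℂ)⁻¹ * ∑ s, (ψ (Ws s ω) - ∫ ω', ψ (Ws s ω') ∂μ)) ∂μ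
    = (d : ℂ)⁻¹ * (∫ ω, φ (W ω) * cj (ψ (W ω)) ∂μ
        - (∫ ω, φ (W ω) ∂μ) * cj (∫ ω, ψ (W ω) ∂μ)) := by
  have hcj : Measurable (fun z : ℂ => cj z) := Complex.continuous_conj.measurable
  have ea : ∀ s, ∫ ω', φ (Ws s ω') ∂μ = ∫ ω, φ (W ω) ∂μ := fun s =>
    ((hid s).comp hφ).integral_eq
  have eb : ∀ s, ∫ ω', ψ (Ws s ω') ∂μ = ∫ ω, ψ (W ω) ∂μ := fun s =>
    ((hid s).comp hψ).integral_eq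
  have hφs : ∀ s, MemLp (fun ω => φ (Ws s ω)) 2 μ := fun s =>
    ((hid s).comp hφ).memLp_iff.2 hφ2
  have hψs : ∀ s, MemLp (fun ω => ψ (Ws s ω)) 2 μ := fun s =>
    ((hid s).comp hψ).memLp_iff.2 hψ2
  simp only [ea, eb]
  set a := ∫ ω, φ (W ω) ∂μ with ha
  set b := ∫ ω, ψ (W ω) ∂μ with hb
  have hmem1 : ∀ s, MemLp (fun ω => φ (Ws s ω) - a) 2 μ := fun s => (hφs s).sub (memLp_const a)
  have hmem2 : ∀ s, MemLp (fun ω => cj (ψ (Ws s ω) - b)) 2 μ := fun s =>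
    ((hψs s).sub (memLp_const b)).star
  have hint : ∀ s t, Integrable (fun ω => (φ (Ws s ω) - a) * cj (ψ (Ws t ω) - b)) μ :=
    fun s t => (hmem1 s).integrable_mul (hmem2 t)
  have hφm : Measurable (fun x => φ x - a) := hφ.sub_const a
  have hψm : Measurable (fun x => cj (ψ x - b)) := hcj.comp (hψ.sub_const b)
  have hoff : ∀ s t, s ≠ t → ∫ ω, (φ (Ws s ω) - a) * cj (ψ (Ws t ω) - b) ∂μ = 0 := by
    intro s t hst
    rw [(hi.indepFun hst).integral_fun_comp_mul_comp (f := fun x => φ x - a)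
      (g := fun x => cj (ψ x - b)) (hid s).aemeasurable_fst (hid t).aemeasurable_fst
      hφm.aestronglyMeasurable hψm.aestronglyMeasurable,
      integral_sub ((hφs s).integrable (by norm_num)) (integrable_const _), ea s]
    simp
  have hdiag : ∀ s, ∫ ω, (φ (Ws s ω) - a) * cj (ψ (Ws s ω) - b) ∂μ
      = ∫ ω, φ (W ω) * cj (ψ (W ω)) ∂μ - a * cj b := by
    intro s
    have h1 : ∫ ω, (φ (Ws s ω) - a) * cj (ψ (Ws s ω) - b) ∂μ
        = ∫ ω, (φ (W ω) - a) * cj (ψ (W ω) - b) ∂μ :=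
      ((hid s).comp (hφm.mul hψm)).integral_eq
    rw [h1]
    have hψ2c : MemLp (fun ω => cj (ψ (W ω))) 2 μ := hψ2.star
    have i1 : Integrable (fun ω => φ (W ω) * cj (ψ (W ω))) μ := hφ2.integrable_mul hψ2c
    have i2 : Integrable (fun ω => φ (W ω) * cj b) μ := (hφ2.integrable (by norm_num)).mul_const _
    have i3 : Integrable (fun ω => a * cj (ψ (W ω))) μ :=
      (hψ2c.integrable (by norm_num)).const_mul _
    have : ∀ ω, (φ (W ω) - a) * cj (ψ (W ω) - b)
        = φ (W ω) * cj (ψ (W ω)) - φ (W ω) * cj b - a * cj (ψ (W ω)) + a * cj b := by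
      intro ω; rw [map_sub]; ring
    simp only [this]
    have k1 := integral_add ((i1.sub i2).sub i3) (integrable_const (μ := μ) (a * cj b))
    have k2 := integral_sub (i1.sub i2) i3
    have k3 := integral_sub i1 i2
    simp only [Pi.sub_apply] at k1 k2 k3
    rw [k1, k2, k3, integral_mul_const, integral_const_mul, integral_conj, ← ha, ← hb]
    simp
  have hexp : ∀ ω, ((d : ℂ)⁻¹ * ∑ s, (φ (Ws s ω) - a)) * cj ((d : ℂ)⁻¹ * ∑ s, (ψ (Ws s ω) - b))
      = (d : ℂ)⁻¹ * (d : ℂ)⁻¹ * ∑ s, ∑ t, (φ (Ws s ω) - a) * cj (ψ (Ws t ω) - b) := by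
    intro ω
    rw [map_mul, map_inv₀, Complex.conj_natCast, map_sum, ← Finset.sum_mul_sum]
    ring
  simp only [hexp]
  rw [integral_const_mul, integral_finsetSum _ fun s _ => integrable_finsetSum _ fun t _ => hint s t]
  have : ∀ s ∈ (Finset.univ : Finset (Fin d)),
      ∫ ω, ∑ t, (φ (Ws s ω) - a) * cj (ψ (Ws t ω) - b) ∂μ
      = ∫ ω, φ (W ω) * cj (ψ (W ω)) ∂μ - a * cj b := by
    intro s _
    rw [integral_finsetSum _ fun t _ => hint s t, Finset.sum_eq_single s, hdiag]
    · intro t _ hts; exact hoff s t hts.symm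
    · simp
  rw [Finset.sum_congr rfl this, Finset.sum_const, Finset.card_univ, Fintype.card_fin, nsmul_eq_mul]
  rcases Nat.eq_zero_or_pos d with rfl | hd
  · simp
  · have : (d : ℂ) ≠ 0 := by exact_mod_cast hd.ne'
    field_simp

/-- Lemma 2.7 of the paper: for `X = (1/d) ∑_s (W_s ⊗ conj(W_s) − E(W_s ⊗ conj(W_s)))` with
`W_1, …, W_d` independent copies of a random matrix `W` satisfying Assumptions 1–4,
`‖Cov(X)‖ ≤ (1/d) · C_β/(log n)^{2α_β}`, where `Cov(X)` is the `n⁴ × n⁴` matrix with entries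
`Cov(X)_{(a,b),(c,e)} = E(X_{ab} conj(X_{ce}))` (recall `E(X) = 0`), `C_β > 0` depends only
on `β, K, K'` and `α_β = max (β/2) 2`. -/
theorem covariance_param_bound :
    ∀ K K' β : ℝ, 0 < K → 0 < K' → 0 ≤ β →
    ∃ Cβ : ℝ, 0 < Cβ ∧
    ∀ n d : ℕ, 2 ≤ n → d ≤ n ^ 2 →
    ∀ (Ω : Type) (_ : MeasurableSpace Ω) (μ : Measure Ω), IsProbabilityMeasure μ →
    ∀ (η : Matrix (Fin n) (Fin n) ℝ) (W : Ω → Matrix (Fin n) (Fin n) ℂ)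
      (Ws : Fin d → Ω → Matrix (Fin n) (Fin n) ℂ),
      PaperAssumptions μ n K K' β η W →
      iIndepFun Ws μ →
      (∀ s, IdentDistrib (Ws s) W μ μ) →
      ∀ X : Ω → Matrix (Fin n × Fin n) (Fin n × Fin n) ℂ,
      X = (fun ω => (d : ℂ)⁻¹ • ∑ s,
            (Ws s ω ⊗ₖ (Ws s ω).map (starRingEnd ℂ)
              - matExp μ fun ω' => Ws s ω' ⊗ₖ (Ws s ω').map (starRingEnd ℂ))) →
      Matrix.opNorm2
          (Matrix.of fun (p q : (Fin n × Fin n) × (Fin n × Fin n)) =>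
            ∫ ω, X ω p.1 p.2 * starRingEnd ℂ (X ω q.1 q.2) ∂μ)
        ≤ (1 / d) * (Cβ / Real.log n ^ (2 * max (β / 2) 2)) := by
  intro K K' β hK hK' hβ
  have h4p : 0 < (2 : ℝ) ^ β := Real.rpow_pos_of_pos (by norm_num) _
  refine ⟨2 * ((1 + (K * 2 ^ β) ^ 2) * K' ^ 2), by positivity, ?_⟩
  intro n d hn hd Ω mΩ μ hμ η W Ws hW hindep hid X hX
  have hlog : 0 < Real.log n := Real.log_pos (by exact_mod_cast hn)
  set α := max (β / 2) 2
  set L := K' / Real.log n ^ α with hLdef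
  set w : Fin n × Fin n → Ω → ℂ := fun p ω => W ω p.1 p.2 with hw
  have hm : ∀ i, AEMeasurable (w i) μ := fun i =>
    (hW.entries_memLp i.1 i.2 1).aestronglyMeasurable.aemeasurable
  have hη : ∀ i j, 0 ≤ η i j := fun i j => by
    rw [← hW.entries_variance i j]; exact integral_nonneg fun ω => by positivity
  have h4 : ∀ i, ∫ ω, ‖w i ω‖ ^ 4 ∂μ ≤ (K * 2 ^ β) ^ 2 * η i.1 i.2 ^ 2 := by
    intro i
    have h := hW.moment_growth 2 (by norm_num) i.1 i.2
    have h0 : 0 ≤ ∫ ω, ‖W ω i.1 i.2‖ ^ (2 * 2) ∂μ := integral_nonneg fun ω => by positivity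
    have h' := pow_le_pow_left₀ (Real.rpow_nonneg h0 _) h 2
    rw [← Real.rpow_natCast, ← Real.rpow_mul h0] at h'
    norm_num at h'
    rw [← mul_pow]
    exact h'
  let φ : (Fin n × Fin n) × (Fin n × Fin n) → Matrix (Fin n) (Fin n) ℂ → ℂ :=
    fun p M => M p.1.1 p.2.1 * cj (M p.1.2 p.2.2)
  have hcj : Measurable (fun z : ℂ => cj z) := Complex.continuous_conj.measurable
  have hent : ∀ i j, Measurable (fun M : Matrix (Fin n) (Fin n) ℂ => M i j) := fun i j =>
    (measurable_pi_apply j).comp (measurable_pi_apply (X := fun _ : Fin n => Fin n → ℂ) i)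
  have hφ : ∀ p, Measurable (φ p) := fun p => (hent _ _).mul (hcj.comp (hent _ _))
  have hφ2 : ∀ p, MemLp (fun ω => φ p (W ω)) 2 μ := by
    intro p
    haveI : ENNReal.HolderTriple 4 4 2 := ⟨by
      rw [show (4 : ℝ≥0∞) = 2 * 2 by norm_num, ENNReal.mul_inv (by simp) (by simp), ← mul_add,
        ENNReal.inv_two_add_inv_two, mul_one]⟩
    have m1 : MemLp (fun ω => W ω p.1.1 p.2.1) 4 μ := by
      exact_mod_cast hW.entries_memLp p.1.1 p.2.1 4
    have m2 : MemLp (fun ω => W ω p.1.2 p.2.2) 4 μ := by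
      exact_mod_cast hW.entries_memLp p.1.2 p.2.2 4
    exact MemLp.mul' m2.star m1
  have key : ∀ p q : (Fin n × Fin n) × (Fin n × Fin n),
      ∫ ω, X ω p.1 p.2 * cj (X ω q.1 q.2) ∂μ = (d : ℂ)⁻¹ *
        (∫ ω, φ p (W ω) * cj (φ q (W ω)) ∂μ
        - (∫ ω, φ p (W ω) ∂μ) * cj (∫ ω, φ q (W ω) ∂μ)) := by
    intro p q
    rw [← cov_average Ws W hindep hid (φ p) (φ q) (hφ p) (hφ q) (hφ2 p) (hφ2 q)]
    subst hX
    simp only [Matrix.smul_apply, Matrix.sum_apply, Matrix.sub_apply, matExp, Matrix.of_apply,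
      Matrix.kroneckerMap_apply, Matrix.map_apply, smul_eq_mul, φ]
  have hb := cov_bound hW.entries_indep hm (fun i => hW.entries_centered i.1 i.2)
    (fun i => η i.1 i.2) _ L (by positivity) (fun i => hW.entries_variance i.1 i.2) h4
    (fun i => hW.max_variance i.1 i.2)
  have hz := cov_zero hW.entries_indep hm (fun i => hW.entries_centered i.1 i.2)
  let σ : Equiv.Perm ((Fin n × Fin n) × (Fin n × Fin n)) :=
    Equiv.prodCongr (Equiv.prodComm _ _) (Equiv.prodComm _ _)
  refine (opNorm2_le_of_sparse _ σ ((1 / d) * ((1 + (K * 2 ^ β) ^ 2) * L ^ 2))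
    (by positivity) ?_ ?_).trans (le_of_eq ?_)
  · rintro ⟨⟨i, i'⟩, ⟨j, j'⟩⟩ ⟨⟨k, k'⟩, ⟨l, l'⟩⟩ h1 h2
    rw [Matrix.of_apply, key]
    have := hz (i, j) (i', j') (k, l) (k', l')
      (by rintro ⟨h, h'⟩; apply h1; simp_all)
      (by rintro ⟨h, h'⟩; apply h2; simp_all [σ])
    simp only [φ]
    rw [this, mul_zero]
  · rintro ⟨⟨i, i'⟩, ⟨j, j'⟩⟩ ⟨⟨k, k'⟩, ⟨l, l'⟩⟩
    rw [Matrix.of_apply, key, norm_mul, norm_inv, Complex.norm_natCast, one_div]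
    exact mul_le_mul_of_nonneg_left (hb (i, j) (i', j') (k, l) (k', l')) (by positivity)
  · rw [hLdef, div_pow, ← Real.rpow_natCast (Real.log n ^ α), ← Real.rpow_mul hlog.le,
      mul_comm α]
    push_cast
    ring
end

section
/- Let W = (W_{ij}) be an n×n complex random matrix whose entries are independent with E(W_{ij}) = 0, E|W_{ij}|² = η_{ij} and E|W_{ij}|⁴ < ∞, and set ζ_{ij} = E(W_{ij}²). Then E( (W ⊗ conj(W))(W ⊗ conj(W))* ) − E(W ⊗ conj(W)) · (E(W ⊗ conj(W)))* = R + S + T, where R = ∑_{i,j,i',j'=1}^n η_{ij} η_{i'j'} E_{ii} ⊗ E_{i'i'}, S = ∑_{i,j,k=1}^n ζ_{ij} conj(ζ_{kj}) E_{ik} ⊗ E_{ki}, and T = ∑_{i,j=1}^n ( E|W_{ij}|⁴ − 2 η_{ij}² − |ζ_{ij}|² ) E_{ii} ⊗ E_{ii}. -/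
open MeasureTheory ProbabilityTheory Matrix
open scoped Kronecker ENNReal

lemma aux_comb {ι : Type*} [Fintype ι] [DecidableEq ι] (M : ι → ℕ → ℕ → ℂ) (e z m : ι → ℂ)
    (h00 : ∀ i, M i 0 0 = 1) (h10 : ∀ i, M i 1 0 = 0) (h01 : ∀ i, M i 0 1 = 0)
    (h11 : ∀ i, M i 1 1 = e i) (h20 : ∀ i, M i 2 0 = z i)
    (h02 : ∀ i, M i 0 2 = starRingEnd ℂ (z i)) (h22 : ∀ i, M i 2 2 = m i) (p q r s : ι) :
    ∏ i, M i ((if p = i then 1 else 0) + (if s = i then 1 else 0))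
      ((if q = i then 1 else 0) + (if r = i then 1 else 0))
    = (if p = q ∧ r = s then e p * e r else 0) + (if p = r ∧ q = s then e p * e q else 0)
      + (if p = s ∧ q = r then z p * starRingEnd ℂ (z q) else 0)
      + (if p = q ∧ p = r ∧ p = s then
          (m p - 2 * e p ^ 2 - z p * starRingEnd ℂ (z p)) else 0) := by
  have iso : ∀ t, M t ((if p = t then 1 else 0) + (if s = t then 1 else 0))
      ((if q = t then 1 else 0) + (if r = t then 1 else 0)) = 0 →
      ∏ i, M i ((if p = i then 1 else 0) + (if s = i then 1 else 0))
      ((if q = i then 1 else 0) + (if r = i then 1 else 0)) = 0 := fun t ht =>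
    Finset.prod_eq_zero (Finset.mem_univ t) ht
  by_cases hpq : p = q
  · subst hpq
    by_cases hrs : r = s
    · subst hrs
      by_cases hpr : p = r
      · subst hpr
        rw [Finset.prod_eq_single p]
        · simp [h22]; ring
        · intro b _ hb
          simp [h00, Ne.symm hb]
        · simp
      · rw [Finset.prod_eq_mul p r hpr]
        · simp [h11, hpr, Ne.symm hpr]
        · intro b _ hb
          simp [h00, Ne.symm hb.1, Ne.symm hb.2]
        · simp
        · simp
    · by_cases hpr : p = r
      · subst hpr
        rw [iso s (by simp [hrs, h10])]
        simp [hrs]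
      · rw [iso r (by simp [hpr, Ne.symm hrs, h01])]
        simp [hrs, hpr]
  · by_cases hpr : p = r
    · subst hpr
      by_cases hqs : q = s
      · subst hqs
        rw [Finset.prod_eq_mul p q hpq]
        · simp [h11, hpq, Ne.symm hpq]
        · intro b _ hb
          simp [h00, Ne.symm hb.1, Ne.symm hb.2]
        · simp
        · simp
      · rw [iso q (by simp [hpq, Ne.symm hqs, h01])]
        simp [hpq, hqs, Ne.symm hpq]
    · by_cases hps : p = s
      · subst hps
        by_cases hqr : q = r
        · subst hqr
          rw [Finset.prod_eq_mul p q hpq]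
          · simp [h20, h02, hpq, Ne.symm hpq]
          · intro b _ hb
            simp [h00, Ne.symm hb.1, Ne.symm hb.2]
          · simp
          · simp
        · rw [iso q (by simp [hpq, Ne.symm hqr, h01])]
          simp [hpq, hqr, hpr]
      · rw [iso p (by simp [Ne.symm hpq, Ne.symm hpr, Ne.symm hps, h10])]
        simp [hpq, hpr, hps]

lemma aux_prod {ι : Type*} [Fintype ι] [DecidableEq ι] (x : ι → ℂ) (p q r s : ι) :
    ∏ i, (x i ^ ((if p = i then 1 else 0) + (if s = i then 1 else 0)) *
      (starRingEnd ℂ (x i)) ^ ((if q = i then 1 else 0) + (if r = i then 1 else 0)))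
    = x p * starRingEnd ℂ (x q) * (starRingEnd ℂ (x r) * x s) := by
  simp only [Finset.prod_mul_distrib, pow_add]
  simp only [Finset.prod_pow_boole, Finset.mem_univ, if_true]
  ring

lemma aux_prod2 {ι : Type*} [Fintype ι] [DecidableEq ι] (x : ι → ℂ) (p q : ι) :
    ∏ i, (x i ^ (if p = i then 1 else 0) *
      (starRingEnd ℂ (x i)) ^ (if q = i then 1 else 0))
    = x p * starRingEnd ℂ (x q) := by
  simp only [Finset.prod_mul_distrib]
  simp only [Finset.prod_pow_boole, Finset.mem_univ, if_true]

lemma aux_mom {ι Ω : Type*} [Fintype ι] [MeasurableSpace Ω] (μ : Measure Ω)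
    (X : ι → Ω → ℂ) (hX : iIndepFun X μ) (hm : ∀ i, AEMeasurable (X i) μ) (a b : ι → ℕ) :
    ∫ ω, ∏ i, (X i ω ^ a i * (starRingEnd ℂ (X i ω)) ^ b i) ∂μ
      = ∏ i, ∫ ω, X i ω ^ a i * (starRingEnd ℂ (X i ω)) ^ b i ∂μ := by
  refine hX.integral_fun_prod_comp (f := fun i z => z ^ a i * (starRingEnd ℂ z) ^ b i) hm ?_
  intro i
  apply Continuous.aestronglyMeasurable
  have := Complex.continuous_conj
  fun_prop

lemma aux_normsq (w : ℂ) : w * starRingEnd ℂ w = ((‖w‖ ^ 2 : ℝ) : ℂ) := by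
  rw [Complex.mul_conj, Complex.normSq_eq_norm_sq]

lemma aux_wick {ι Ω : Type*} [Fintype ι] [DecidableEq ι] [MeasurableSpace Ω] (μ : Measure Ω)
    [IsProbabilityMeasure μ]
    (X : ι → Ω → ℂ) (hX : iIndepFun X μ) (hm : ∀ i, AEMeasurable (X i) μ)
    (e : ι → ℝ) (z : ι → ℂ)
    (h0 : ∀ i, ∫ ω, X i ω ∂μ = 0) (hv : ∀ i, ∫ ω, ‖X i ω‖ ^ 2 ∂μ = e i)
    (hz : ∀ i, ∫ ω, X i ω ^ 2 ∂μ = z i) (p q r s : ι) :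
    ∫ ω, X p ω * starRingEnd ℂ (X q ω) * (starRingEnd ℂ (X r ω) * X s ω) ∂μ
    = (if p = q ∧ r = s then (e p : ℂ) * e r else 0)
      + (if p = r ∧ q = s then (e p : ℂ) * e q else 0)
      + (if p = s ∧ q = r then z p * starRingEnd ℂ (z q) else 0)
      + (if p = q ∧ p = r ∧ p = s then
          (((∫ ω, ‖X p ω‖ ^ 4 ∂μ : ℝ) : ℂ) - 2 * (e p : ℂ) ^ 2
            - z p * starRingEnd ℂ (z p)) else 0) := by
  have hp := fun ω => (aux_prod (fun i => X i ω) p q r s).symm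
  rw [integral_congr_ae (Filter.Eventually.of_forall hp)]
  rw [aux_mom μ X hX hm]
  refine aux_comb (fun i a b => ∫ ω, X i ω ^ a * (starRingEnd ℂ (X i ω)) ^ b ∂μ)
    (fun i => (e i : ℂ)) z (fun i => ((∫ ω, ‖X i ω‖ ^ 4 ∂μ : ℝ) : ℂ)) ?_ ?_ ?_ ?_ ?_ ?_ ?_ p q r s
  · intro i; simp
  · intro i; simp [h0]
  · intro i; simp [integral_conj, h0]
  · intro i
    simp only [pow_one, aux_normsq]
    rw [integral_complex_ofReal, hv]
  · intro i; simp [hz]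
  · intro i
    simp only [pow_zero, one_mul, ← map_pow]
    rw [integral_conj, hz]
  · intro i
    simp only [← mul_pow, aux_normsq]
    rw [← integral_complex_ofReal]
    congr 1; ext ω; push_cast; ring

lemma aux_cov {ι Ω : Type*} [Fintype ι] [DecidableEq ι] [MeasurableSpace Ω] (μ : Measure Ω)
    [IsProbabilityMeasure μ]
    (X : ι → Ω → ℂ) (hX : iIndepFun X μ) (hm : ∀ i, AEMeasurable (X i) μ)
    (e : ι → ℝ)
    (h0 : ∀ i, ∫ ω, X i ω ∂μ = 0) (hv : ∀ i, ∫ ω, ‖X i ω‖ ^ 2 ∂μ = e i) (p q : ι) :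
    ∫ ω, X p ω * starRingEnd ℂ (X q ω) ∂μ = if p = q then (e p : ℂ) else 0 := by
  by_cases h : p = q
  · subst h
    simp only [aux_normsq, if_true]
    rw [integral_complex_ofReal, hv]
  · have hp := fun ω => (aux_prod2 (fun i => X i ω) p q).symm
    rw [integral_congr_ae (Filter.Eventually.of_forall hp)]
    rw [aux_mom μ X hX hm, if_neg h]
    apply Finset.prod_eq_zero (Finset.mem_univ p)
    simp [Ne.symm h, h0]

lemma aux_int {Ω : Type*} [MeasurableSpace Ω] (μ : Measure Ω) (f g h k : Ω → ℂ)
    (hf : MemLp f 4 μ) (hg : MemLp g 4 μ) (hh : MemLp h 4 μ) (hk : MemLp k 4 μ) :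
    Integrable (fun ω => f ω * starRingEnd ℂ (g ω) * (starRingEnd ℂ (h ω) * k ω)) μ := by
  have T : ENNReal.HolderTriple 4 4 2 := ⟨by
    rw [← two_mul, show (4 : ℝ≥0∞) = 2 * 2 by norm_num, ENNReal.mul_inv (by simp) (by simp),
      ← mul_assoc, ENNReal.mul_inv_cancel (by simp) (by simp), one_mul]⟩
  have a : MemLp (fun ω => f ω * starRingEnd ℂ (g ω)) 2 μ := MemLp.mul' hg.star hf
  have b : MemLp (fun ω => starRingEnd ℂ (h ω) * k ω) 2 μ := MemLp.mul' hk hh.star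
  exact a.integrable_mul b

/-- The covariance computation in Lemma 2.6 of the paper: for `W` with independent centered
entries with `E|W_{ij}|² = η_{ij}`, `ζ_{ij} = E(W_{ij}²)` and finite fourth moments,
`E((W ⊗ conj W)(W ⊗ conj W)*) − E(W ⊗ conj W)(E(W ⊗ conj W))* = R + S + T` with
`R = ∑_{i,j,i',j'} η_{ij} η_{i'j'} E_{ii} ⊗ E_{i'i'}`,
`S = ∑_{i,j,k} ζ_{ij} conj(ζ_{kj}) E_{ik} ⊗ E_{ki}` and
`T = ∑_{i,j} (E|W_{ij}|⁴ − 2η_{ij}² − |ζ_{ij}|²) E_{ii} ⊗ E_{ii}`. -/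
theorem second_moment_decomposition
    (n : ℕ)
    (Ω : Type) (_ : MeasurableSpace Ω) (μ : Measure Ω) (_ : IsProbabilityMeasure μ)
    (η : Matrix (Fin n) (Fin n) ℝ) (ζ : Matrix (Fin n) (Fin n) ℂ)
    (W : Ω → Matrix (Fin n) (Fin n) ℂ)
    (hindep : iIndepFun
      (fun (p : Fin n × Fin n) ω => W ω p.1 p.2) μ)
    (hL4 : ∀ i j, MemLp (fun ω => W ω i j) 4 μ)
    (hcent : ∀ i j, ∫ ω, W ω i j ∂μ = 0)
    (hvar : ∀ i j, ∫ ω, ‖W ω i j‖ ^ 2 ∂μ = η i j)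
    (hzeta : ∀ i j, ∫ ω, (W ω i j) ^ 2 ∂μ = ζ i j) :
    matExp μ (fun ω => (W ω ⊗ₖ (W ω).map (starRingEnd ℂ))
        * (W ω ⊗ₖ (W ω).map (starRingEnd ℂ))ᴴ)
      - matExp μ (fun ω => W ω ⊗ₖ (W ω).map (starRingEnd ℂ))
        * (matExp μ (fun ω => W ω ⊗ₖ (W ω).map (starRingEnd ℂ)))ᴴ
    = (∑ i : Fin n, ∑ j : Fin n, ∑ i' : Fin n, ∑ j' : Fin n,
        ((η i j * η i' j' : ℝ) : ℂ) •
          (Matrix.single i i (1 : ℂ) ⊗ₖ Matrix.single i' i' (1 : ℂ)))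
      + (∑ i : Fin n, ∑ j : Fin n, ∑ k : Fin n,
        (ζ i j * starRingEnd ℂ (ζ k j)) •
          (Matrix.single i k (1 : ℂ) ⊗ₖ Matrix.single k i (1 : ℂ)))
      + (∑ i : Fin n, ∑ j : Fin n,
        (((∫ ω, ‖W ω i j‖ ^ 4 ∂μ) - 2 * η i j ^ 2 - ‖ζ i j‖ ^ 2 : ℝ) : ℂ) •
          (Matrix.single i i (1 : ℂ) ⊗ₖ Matrix.single i i (1 : ℂ))) := by
  have hm : ∀ p : Fin n × Fin n, AEMeasurable (fun ω => W ω p.1 p.2) μ := fun p =>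
    (hL4 p.1 p.2).aestronglyMeasurable.aemeasurable
  have wick := aux_wick μ (fun (p : Fin n × Fin n) ω => W ω p.1 p.2) hindep hm
    (fun p => η p.1 p.2) (fun p => ζ p.1 p.2) (fun p => hcent _ _) (fun p => hvar _ _)
    (fun p => hzeta _ _)
  have cov := aux_cov μ (fun (p : Fin n × Fin n) ω => W ω p.1 p.2) hindep hm
    (fun p => η p.1 p.2) (fun p => hcent _ _) (fun p => hvar _ _)
  ext ⟨a, b⟩ ⟨c, d⟩
  have L : (matExp μ (fun ω => (W ω ⊗ₖ (W ω).map (starRingEnd ℂ))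
        * (W ω ⊗ₖ (W ω).map (starRingEnd ℂ))ᴴ)
      - matExp μ (fun ω => W ω ⊗ₖ (W ω).map (starRingEnd ℂ))
        * (matExp μ (fun ω => W ω ⊗ₖ (W ω).map (starRingEnd ℂ)))ᴴ) (a, b) (c, d)
      = ∑ j, ∑ l, ((∫ ω, W ω a j * starRingEnd ℂ (W ω b l) *
          (starRingEnd ℂ (W ω c j) * W ω d l) ∂μ)
          - (∫ ω, W ω a j * starRingEnd ℂ (W ω b l) ∂μ) *
            starRingEnd ℂ (∫ ω, W ω c j * starRingEnd ℂ (W ω d l) ∂μ)) := by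
    simp only [Finset.sum_sub_distrib]
    simp only [matExp, Matrix.sub_apply, Matrix.of_apply, Matrix.mul_apply,
      Matrix.conjTranspose_apply, Matrix.kroneckerMap_apply, Matrix.map_apply,
      Fintype.sum_prod_type]
    congr 1
    rw [integral_finsetSum]
    · refine Finset.sum_congr rfl fun j _ => ?_
      rw [integral_finsetSum]
      · refine Finset.sum_congr rfl fun l _ => ?_
        simp
      · intro l _
        simpa using aux_int μ _ _ _ _ (hL4 a j) (hL4 b l) (hL4 c j) (hL4 d l)
    · intro j _
      refine integrable_finsetSum _ fun l _ => ?_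
      simpa using aux_int μ _ _ _ _ (hL4 a j) (hL4 b l) (hL4 c j) (hL4 d l)
  rw [L]
  have key : ∀ j l, ((∫ ω, W ω a j * starRingEnd ℂ (W ω b l) *
          (starRingEnd ℂ (W ω c j) * W ω d l) ∂μ)
          - (∫ ω, W ω a j * starRingEnd ℂ (W ω b l) ∂μ) *
            starRingEnd ℂ (∫ ω, W ω c j * starRingEnd ℂ (W ω d l) ∂μ))
      = (if a = c ∧ b = d then (η a j : ℂ) * η b l else 0)
      + (if j = l then (if a = d ∧ b = c then ζ a j * starRingEnd ℂ (ζ b j) else 0) else 0)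
      + (if j = l then (if a = b ∧ a = c ∧ a = d then
        (((∫ ω, ‖W ω a j‖ ^ 4 ∂μ) - 2 * η a j ^ 2 - ‖ζ a j‖ ^ 2 : ℝ) : ℂ) else 0) else 0) := by
    intro j l
    have w := wick (a, j) (b, l) (c, j) (d, l)
    have c1 := cov (a, j) (b, l)
    have c2 := cov (c, j) (d, l)
    simp only [Prod.mk.injEq] at w c1 c2
    rw [w, c1, c2]
    rw [aux_normsq]
    push_cast
    by_cases hjl : j = l
    · subst hjl
      by_cases h1 : a = b <;> by_cases h2 : c = d <;> simp [h1, h2] <;> ring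
    · simp [hjl, Ne.symm hjl]
  simp only [key, Finset.sum_add_distrib, Finset.sum_ite_eq, Finset.mem_univ, if_true]
  simp only [Matrix.add_apply, Matrix.sum_apply, Matrix.smul_apply, Matrix.kroneckerMap_apply,
    Matrix.single_apply, smul_eq_mul]
  congr 1
  · congr 1
    · symm
      rw [Finset.sum_eq_single a (by intro i _ hi; simp [hi]) (by simp)]
      refine Finset.sum_congr rfl fun j _ => ?_
      rw [Finset.sum_eq_single b (by intro i _ hi; simp [hi]) (by simp)]
      refine Finset.sum_congr rfl fun l _ => ?_
      by_cases h1 : a = c <;> by_cases h2 : b = d <;> simp [h1, h2]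
    · symm
      rw [Finset.sum_eq_single a (by intro i _ hi; simp [hi]) (by simp)]
      refine Finset.sum_congr rfl fun j _ => ?_
      rw [Finset.sum_eq_single b (by intro i _ hi; simp [hi]) (by simp)]
      by_cases h1 : a = d <;> by_cases h2 : b = c <;> simp [h1, h2]
  · symm
    rw [Finset.sum_eq_single a (by intro i _ hi; simp [hi]) (by simp)]
    refine Finset.sum_congr rfl fun j _ => ?_
    by_cases h1 : a = b <;> by_cases h2 : a = c <;> by_cases h3 : a = d <;> simp [h1, h2, h3] <;>
      grind
end
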